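/- Convergence of the Fast Dawid–Skene iteration (Theorem 1): let z⁰, z¹, z², … be a sequence of hard assignments and (pᵐ, πᵐ) for m ≥ 1 be defined by the M-step estimators pᵐ := p̂_{z^{m-1}}, πᵐ := π̂_{z^{m-1}}, and suppose the EC-step holds: for every m ≥ 1 and every q, zᵐ q maximizes c ↦ pᵐ c · f(q, c) (with f computed from πᵐ) and zᵐ q = z^{m-1} q whenever z^{m-1} q attains this maximum. Assume well-definedness: for every m, every class is nonempty under zᵐ and for each c, a, ∑_{l'} ∑_{q : zᵐ q = c} n q a l' > 0. Then the sequence m ↦ C₂(zᵐ, pᵐ, πᵐ) is nondecreasing, and there exists M such that zᵐ = z^M, pᵐ = p^M, and πᵐ = π^M for all m ≥ M; in particular C₂(zᵐ, pᵐ, πᵐ) converges to a stationary value. -/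

import Mathlib

open Finset

/-- `fDS n π q c = ∏ a, ∏ l, (π c a l) ^ (n q a l)`, the likelihood of the responses to
question `q` given that its true answer is `c`, under error rates `π`. -/
noncomputable def fDS {Q A C : Type*} [Fintype A] [Fintype C]
    (n : Q → A → C → ℕ) (π : C → A → C → ℝ) (q : Q) (c : C) : ℝ :=
  ∏ a, ∏ l, (π c a l) ^ (n q a l)

/-- The classification maximum likelihood (CML) criterion
`C₂(z, p, π) = ∑ q, log (p (z q) * f(q, z q))`. -/
noncomputable def C2 {Q A C : Type*} [Fintype Q] [Fintype A] [Fintype C]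
    (n : Q → A → C → ℕ) (z : Q → C) (p : C → ℝ) (π : C → A → C → ℝ) : ℝ :=
  ∑ q, Real.log (p (z q) * fDS n π q (z q))

/-- M-step estimator for the class marginals: `p̂_z(c) = |{q : z q = c}| / |Q|`. -/
noncomputable def phat {Q C : Type*} [Fintype Q] [DecidableEq C] (z : Q → C) (c : C) : ℝ :=
  ((Finset.univ.filter (fun q => z q = c)).card : ℝ) / (Fintype.card Q : ℝ)

/-- M-step estimator for the annotator error rates:
`π̂_z(c, a, l) = (∑_{q : z q = c} n q a l) / (∑ l', ∑_{q : z q = c} n q a l')`. -/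
noncomputable def pihat {Q A C : Type*} [Fintype Q] [Fintype C] [DecidableEq C]
    (n : Q → A → C → ℕ) (z : Q → C) (c : C) (a : A) (l : C) : ℝ :=
  (∑ q ∈ Finset.univ.filter (fun q => z q = c), (n q a l : ℝ)) /
    (∑ l', ∑ q ∈ Finset.univ.filter (fun q => z q = c), (n q a l' : ℝ))

/-!
The iteration is alternating maximization of `C₂`. Grouping the questions by class splits
`C₂(z, p, π)` into sums `∑ i, w i * log (x i)` whose weights are the class sizes and the vote counts
of `z`; by Gibbs' inequality each is largest, over nonnegative `x` of total mass at most one, at the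
normalized weights, which are the M-step estimators. An EC-step with the parameters held fixed
raises `C₂` strictly unless it changes no label, so `C₂(z, p̂_z, π̂_z)` strictly increases along the
iteration until the assignment stops moving; as there are finitely many assignments, it does stop.
-/

section Gibbs

variable {ι : Type*} {s : Finset ι} {w x : ι → ℝ}

lemma sum_mul_log_le_sum_mul_log_div_sum (hw : ∀ i ∈ s, 0 ≤ w i) (hx : ∀ i ∈ s, 0 ≤ x i)
    (hwx : ∀ i ∈ s, w i ≠ 0 → x i ≠ 0) (hsum : ∑ i ∈ s, x i ≤ 1) :
    ∑ i ∈ s, w i * Real.log (x i) ≤ ∑ i ∈ s, w i * Real.log (w i / ∑ j ∈ s, w j) := by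
  set W := ∑ j ∈ s, w j
  have hW : 0 ≤ W := sum_nonneg hw
  -- `log t ≤ t - 1` at `t = x i / (w i / W)`, multiplied by `w i`.
  have tangent_bound : ∀ i ∈ s,
      w i * Real.log (x i) ≤ w i * Real.log (w i / W) + (W * x i - w i) := by
    intro i hi
    rcases (hw i hi).eq_or_lt' with hwi | hwi
    · simpa [hwi] using mul_nonneg hW (hx i hi)
    have hxi : 0 < x i := (hx i hi).lt_of_ne' (hwx i hi hwi.ne')
    have hWpos : 0 < W := hwi.trans_le (single_le_sum hw hi)
    have hlog : Real.log (x i) - Real.log (w i / W) ≤ x i / (w i / W) - 1 := by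
      rw [← Real.log_div hxi.ne' (div_pos hwi hWpos).ne']
      exact Real.log_le_sub_one_of_pos (div_pos hxi (div_pos hwi hWpos))
    calc w i * Real.log (x i)
        = w i * Real.log (w i / W) + w i * (Real.log (x i) - Real.log (w i / W)) := by ring
      _ ≤ w i * Real.log (w i / W) + w i * (x i / (w i / W) - 1) := by gcongr
      _ = w i * Real.log (w i / W) + (W * x i - w i) := by field_simp
  calc ∑ i ∈ s, w i * Real.log (x i)
      ≤ ∑ i ∈ s, (w i * Real.log (w i / W) + (W * x i - w i)) := sum_le_sum tangent_bound
    _ = ∑ i ∈ s, w i * Real.log (w i / W) + (W * ∑ i ∈ s, x i - W) := by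
        rw [sum_add_distrib, sum_sub_distrib, ← mul_sum]
    _ ≤ ∑ i ∈ s, w i * Real.log (w i / W) := by
        linarith [mul_le_of_le_one_right hW hsum]

end Gibbs

lemma exists_forall_ge_eq_of_ne_imp_lt {α β : Type*} [Finite α] [Preorder β] {F : α → β}
    {u : ℕ → α} (hu : ∀ m, u (m + 1) ≠ u m → F (u m) < F (u (m + 1))) :
    ∃ M, ∀ m ≥ M, u m = u M := by
  obtain ⟨_, ⟨M, rfl⟩, hmax⟩ :=
    (Set.toFinite (Set.range u)).exists_maximalFor F _ (Set.range_nonempty u)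
  refine ⟨M, fun m hm ↦ ?_⟩
  induction m, hm using Nat.le_induction with
  | base => rfl
  | succ k _ ih =>
    by_contra hne
    have hlt : F (u M) < F (u (k + 1)) := ih ▸ hu k (ih.symm ▸ hne)
    exact hlt.not_ge (hmax ⟨k + 1, rfl⟩ hlt.le)

section Likelihood

variable {Q A C : Type*} [Fintype A] [Fintype C] {n : Q → A → C → ℕ} {π : C → A → C → ℝ}
  {q : Q} {c : C}

lemma fDS_ne_zero_iff : fDS n π q c ≠ 0 ↔ ∀ a l, n q a l ≠ 0 → π c a l ≠ 0 := by
  simp [fDS, prod_ne_zero_iff, pow_eq_zero_iff', not_imp_not]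

lemma log_fDS (h : fDS n π q c ≠ 0) :
    Real.log (fDS n π q c) = ∑ a, ∑ l, n q a l * Real.log (π c a l) := by
  have hrow : ∀ a ∈ univ, ∏ l, π c a l ^ n q a l ≠ 0 := prod_ne_zero_iff.mp h
  rw [fDS, Real.log_prod hrow]
  refine sum_congr rfl fun a ha ↦ ?_
  rw [Real.log_prod (prod_ne_zero_iff.mp (hrow a ha))]
  simp only [Real.log_pow]

end Likelihood

section ECStep

variable {Q A C : Type*} [Fintype Q] [Fintype A] [Fintype C] {n : Q → A → C → ℕ}
  {z z' : Q → C} {p : C → ℝ} {π : C → A → C → ℝ}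

lemma C2_le_C2 (hpos : ∀ q, 0 < p (z q) * fDS n π q (z q))
    (hle : ∀ q, p (z q) * fDS n π q (z q) ≤ p (z' q) * fDS n π q (z' q)) :
    C2 n z p π ≤ C2 n z' p π :=
  sum_le_sum fun q _ ↦ Real.log_le_log (hpos q) (hle q)

lemma C2_lt_C2 (hpos : ∀ q, 0 < p (z q) * fDS n π q (z q))
    (hle : ∀ q, p (z q) * fDS n π q (z q) ≤ p (z' q) * fDS n π q (z' q))
    (hlt : ∃ q, p (z q) * fDS n π q (z q) < p (z' q) * fDS n π q (z' q)) :
    C2 n z p π < C2 n z' p π := by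
  obtain ⟨q₀, hq₀⟩ := hlt
  exact sum_lt_sum (fun q _ ↦ Real.log_le_log (hpos q) (hle q))
    ⟨q₀, mem_univ q₀, Real.log_lt_log (hpos q₀) hq₀⟩

end ECStep

section Estimators

variable {Q A C : Type*} [Fintype Q] [DecidableEq C] (n : Q → A → C → ℕ) (z : Q → C)

/-- The sufficient statistic of the error rates: the number of times annotator `a` answered `l`
on the questions that `z` puts into class `c`, cast to `ℝ` as in `pihat`. -/
def voteCount (c : C) (a : A) (l : C) : ℝ :=
  ∑ q with z q = c, (n q a l : ℝ)

lemma voteCount_nonneg (c : C) (a : A) (l : C) : 0 ≤ voteCount n z c a l :=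
  sum_nonneg fun _ _ ↦ Nat.cast_nonneg _

variable {n z} in
lemma voteCount_ne_zero_iff {c : C} {a : A} {l : C} :
    voteCount n z c a l ≠ 0 ↔ ∃ q, z q = c ∧ n q a l ≠ 0 := by
  simp [voteCount, sum_eq_zero_iff_of_nonneg]

lemma phat_nonneg (c : C) : 0 ≤ phat z c := by
  unfold phat
  positivity

lemma phat_apply_pos (q : Q) : 0 < phat z (z q) := by
  have : Nonempty Q := ⟨q⟩
  have hfiber : 0 < #{q' | z q' = z q} := card_pos.mpr ⟨q, by simp⟩
  unfold phat
  positivity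

variable [Fintype C]

lemma sum_card_fiber : ∑ c, (#{q | z q = c} : ℝ) = Fintype.card Q := by
  exact_mod_cast (card_eq_sum_card_fiberwise fun q _ ↦ mem_univ (z q)).symm

lemma sum_phat_le_one : ∑ c, phat z c ≤ 1 := by
  simp only [phat, ← sum_div, sum_card_fiber]
  exact div_self_le_one _

lemma pihat_eq_div (c : C) (a : A) (l : C) :
    pihat n z c a l = voteCount n z c a l / ∑ l', voteCount n z c a l' := rfl

lemma pihat_nonneg (c : C) (a : A) (l : C) : 0 ≤ pihat n z c a l :=
  div_nonneg (voteCount_nonneg n z c a l) (sum_nonneg fun l' _ ↦ voteCount_nonneg n z c a l')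

-- Not an equality: a row without votes is `0 / 0 = 0` and has sum `0`.
lemma sum_pihat_le_one (c : C) (a : A) : ∑ l, pihat n z c a l ≤ 1 := by
  simp only [pihat_eq_div, ← sum_div]
  exact div_self_le_one _

lemma pihat_ne_zero {q : Q} {a : A} {l : C} (h : n q a l ≠ 0) : pihat n z (z q) a l ≠ 0 := by
  have hvote : voteCount n z (z q) a l ≠ 0 := voteCount_ne_zero_iff.mpr ⟨q, rfl, h⟩
  have hpos : 0 < voteCount n z (z q) a l := (voteCount_nonneg n z _ a l).lt_of_ne' hvote
  have htotal : 0 < ∑ l', voteCount n z (z q) a l' :=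
    sum_pos' (fun l' _ ↦ voteCount_nonneg n z _ a l') ⟨l, mem_univ l, hpos⟩
  exact (div_pos hpos htotal).ne'

variable [Fintype A]

lemma phat_mul_fDS_pihat_pos (q : Q) : 0 < phat z (z q) * fDS n (pihat n z) q (z q) := by
  have hf : fDS n (pihat n z) q (z q) ≠ 0 := fDS_ne_zero_iff.mpr fun _ _ ↦ pihat_ne_zero n z
  have hf_nonneg : 0 ≤ fDS n (pihat n z) q (z q) :=
    prod_nonneg fun a _ ↦ prod_nonneg fun l _ ↦ pow_nonneg (pihat_nonneg n z _ a l) _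
  exact mul_pos (phat_apply_pos z q) (hf_nonneg.lt_of_ne' hf)

end Estimators

section MStep

variable {Q A C : Type*} [Fintype Q] [Fintype A] [Fintype C] [DecidableEq C]
  {n : Q → A → C → ℕ} {z : Q → C} {p : C → ℝ} {π : C → A → C → ℝ}

lemma C2_eq_sum_classes (h : ∀ q, p (z q) * fDS n π q (z q) ≠ 0) :
    C2 n z p π = ∑ c, #{q | z q = c} * Real.log (p c) +
      ∑ c, ∑ a, ∑ l, voteCount n z c a l * Real.log (π c a l) := by
  have log_term : ∀ q, Real.log (p (z q) * fDS n π q (z q)) =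
      Real.log (p (z q)) + ∑ a, ∑ l, n q a l * Real.log (π (z q) a l) := fun q ↦ by
    rw [Real.log_mul (left_ne_zero_of_mul (h q)) (right_ne_zero_of_mul (h q)),
      log_fDS (right_ne_zero_of_mul (h q))]
  have class_term (c : C) :
      ∑ q with z q = c, (Real.log (p (z q)) + ∑ a, ∑ l, n q a l * Real.log (π (z q) a l)) =
        #{q | z q = c} * Real.log (p c) +
          ∑ a, ∑ l, voteCount n z c a l * Real.log (π c a l) := by
    calc _ = ∑ q with z q = c, (Real.log (p c) + ∑ a, ∑ l, n q a l * Real.log (π c a l)) :=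
          sum_congr rfl fun q hq ↦ by rw [(mem_filter.mp hq).2]
      _ = _ := by
          simp only [sum_add_distrib, sum_const, nsmul_eq_mul, voteCount, sum_mul]
          rw [sum_comm]
          simp only [sum_comm (s := univ.filter _)]
  simp only [C2, log_term]
  rw [← sum_fiberwise univ z, ← sum_add_distrib]
  exact sum_congr rfl fun c _ ↦ class_term c

lemma C2_le_C2_phat_pihat (hp : ∀ c, 0 ≤ p c) (hp_sum : ∑ c, p c ≤ 1)
    (hπ : ∀ c a l, 0 ≤ π c a l) (hπ_sum : ∀ c a, ∑ l, π c a l ≤ 1)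
    (h : ∀ q, p (z q) * fDS n π q (z q) ≠ 0) :
    C2 n z p π ≤ C2 n z (phat z) (pihat n z) := by
  have hp_ne : ∀ c, (#{q | z q = c} : ℝ) ≠ 0 → p c ≠ 0 := fun c hc ↦ by
    obtain ⟨q, hq⟩ := card_ne_zero.mp (Nat.cast_ne_zero.mp hc)
    exact (mem_filter.mp hq).2 ▸ left_ne_zero_of_mul (h q)
  have hπ_ne : ∀ c a l, voteCount n z c a l ≠ 0 → π c a l ≠ 0 := fun c a l hv ↦ by
    obtain ⟨q, rfl, hn⟩ := voteCount_ne_zero_iff.mp hv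
    exact fDS_ne_zero_iff.mp (right_ne_zero_of_mul (h q)) a l hn
  have marginals_le : ∑ c, #{q | z q = c} * Real.log (p c) ≤
      ∑ c, #{q | z q = c} * Real.log (phat z c) := by
    simpa only [phat, sum_card_fiber] using sum_mul_log_le_sum_mul_log_div_sum
      (fun _ _ ↦ Nat.cast_nonneg _) (fun c _ ↦ hp c) (fun c _ ↦ hp_ne c) hp_sum
  have rates_le (c : C) (a : A) : ∑ l, voteCount n z c a l * Real.log (π c a l) ≤
      ∑ l, voteCount n z c a l * Real.log (pihat n z c a l) :=
    sum_mul_log_le_sum_mul_log_div_sum (fun l _ ↦ voteCount_nonneg n z c a l)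
      (fun l _ ↦ hπ c a l) (fun l _ ↦ hπ_ne c a l) (hπ_sum c a)
  rw [C2_eq_sum_classes h, C2_eq_sum_classes fun q ↦ (phat_mul_fDS_pihat_pos n z q).ne']
  exact add_le_add marginals_le (sum_le_sum fun c _ ↦ sum_le_sum fun a _ ↦ rates_le c a)

end MStep

/-- Convergence for any relabelling rule that moves a question only to a class of strictly larger
score `p c * f(q, c)`, not necessarily to a maximizing one. -/
theorem FDS_convergence_general {Q A C : Type*} [Fintype Q] [Fintype A] [Fintype C]
    [DecidableEq C] (n : Q → A → C → ℕ) (z : ℕ → Q → C)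
    (hstep : ∀ m q, z (m + 1) q ≠ z m q →
      phat (z m) (z m q) * fDS n (pihat n (z m)) q (z m q) <
        phat (z m) (z (m + 1) q) * fDS n (pihat n (z m)) q (z (m + 1) q)) :
    Monotone (fun m => C2 n (z (m + 1)) (phat (z m)) (pihat n (z m))) ∧
    ∃ M : ℕ, (∀ m ≥ M, z m = z M ∧ phat (z m) = phat (z M) ∧
        pihat n (z m) = pihat n (z M)) ∧
      ∀ m ≥ M, C2 n (z (m + 1)) (phat (z m)) (pihat n (z m)) =
        C2 n (z (M + 1)) (phat (z M)) (pihat n (z M)) := by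
  have hpos (m : ℕ) (q : Q) : 0 < phat (z m) (z m q) * fDS n (pihat n (z m)) q (z m q) :=
    phat_mul_fDS_pihat_pos n (z m) q
  have hle : ∀ m q, phat (z m) (z m q) * fDS n (pihat n (z m)) q (z m q) ≤
      phat (z m) (z (m + 1) q) * fDS n (pihat n (z m)) q (z (m + 1) q) := fun m q ↦ by
    rcases eq_or_ne (z (m + 1) q) (z m q) with hq | hq
    · rw [hq]
    · exact (hstep m q hq).le
  have m_step (m : ℕ) : C2 n (z (m + 1)) (phat (z m)) (pihat n (z m)) ≤
      C2 n (z (m + 1)) (phat (z (m + 1))) (pihat n (z (m + 1))) :=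
    C2_le_C2_phat_pihat (phat_nonneg _) (sum_phat_le_one _) (pihat_nonneg n _)
      (sum_pihat_le_one n _) fun q ↦ ((hpos m q).trans_le (hle m q)).ne'
  refine ⟨monotone_nat_of_le_succ fun m ↦ (m_step m).trans (C2_le_C2 (hpos _) (hle _)), ?_⟩
  obtain ⟨M, hM⟩ := exists_forall_ge_eq_of_ne_imp_lt (F := fun y ↦ C2 n y (phat y) (pihat n y))
    fun m hne ↦ (C2_lt_C2 (hpos m) (hle m)
      ((Function.ne_iff.mp hne).imp (hstep m))).trans_le (m_step m)
  refine ⟨M, fun m hm ↦ ?_, fun m hm ↦ ?_⟩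
  · simp only [hM m hm, and_self]
  · rw [hM m hm, hM (m + 1) (by omega), hM (M + 1) (by omega)]

/-- Convergence of the Fast Dawid–Skene iteration (Theorem 1): along the FDS iterates
`z⁰, z¹, …` with M-step parameters `p^{m+1} := p̂_{zᵐ}`, `π^{m+1} := π̂_{zᵐ}` and EC-steps
(with tie-breaking) producing `z^{m+1}`, the CML values `C₂(z^{m+1}, p^{m+1}, π^{m+1})`
are nondecreasing, the sequence of assignments (hence of parameters) is eventually
constant, and the CML values converge to a stationary value. -/
theorem FDS_convergence {Q A C : Type*}
    [Fintype Q] [Nonempty Q] [Fintype A] [Nonempty A] [Fintype C] [Nonempty C]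
    [DecidableEq C] (n : Q → A → C → ℕ) (z : ℕ → Q → C)
    (hz : ∀ m c, ∃ q, z m q = c)
    (hden : ∀ m c a, 0 < ∑ l', ∑ q ∈ Finset.univ.filter (fun q => z m q = c), n q a l')
    (hmax : ∀ m q c, phat (z m) c * fDS n (pihat n (z m)) q c ≤
      phat (z m) (z (m + 1) q) * fDS n (pihat n (z m)) q (z (m + 1) q))
    (htie : ∀ m q,
      (∀ c, phat (z m) c * fDS n (pihat n (z m)) q c ≤
        phat (z m) (z m q) * fDS n (pihat n (z m)) q (z m q)) → z (m + 1) q = z m q) :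
    Monotone (fun m => C2 n (z (m + 1)) (phat (z m)) (pihat n (z m))) ∧
    ∃ M : ℕ, (∀ m ≥ M, z m = z M ∧ phat (z m) = phat (z M) ∧
        pihat n (z m) = pihat n (z M)) ∧
      ∀ m ≥ M, C2 n (z (m + 1)) (phat (z m)) (pihat n (z m)) =
        C2 n (z (M + 1)) (phat (z M)) (pihat n (z M)) :=
  FDS_convergence_general n z fun m q hq ↦ lt_of_not_ge fun hge ↦
    hq (htie m q fun c ↦ (hmax m q c).trans hge)
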